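/- Let R > 0 and θ ∈ (π/2, π], and consider the set T = { τ > 0 : there exists ω ∈ ℝ with iω·e^{iωτ} = R·e^{iθ} }. Then T is nonempty, (θ − π/2)/R ∈ T (attained with ω = R), and (θ − π/2)/R = min T, i.e. (θ − π/2)/R is the smallest positive delay for which the equation s·e^{sτ} = R·e^{iθ} admits a purely imaginary solution. -/

import Mathlib

open Complex Real

/-!
Since `i = e^{iπ/2}`, comparing polar forms in `iω·e^{iωτ} = R·e^{iθ}` forces `ω = (-1)^k R` and
`ωτ = θ - π/2 - kπ` for some integer `k`. With `φ = θ - π/2`, the admissible values of `Rτ` are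
therefore the translates `φ - kπ` with `k` even and the reflections `kπ - φ` with `k` odd. When
`0 < φ ≤ π/2` the least positive one is `φ` itself, its nearest competitor being `π - φ`.
-/

theorem ofReal_mul_exp_I_mul_eq_iff {r s : ℝ} (hs : s ≠ 0) (α β : ℝ) :
    (r : ℂ) * cexp (I * α) = s * cexp (I * β) ↔
      ∃ k : ℤ, r = s * (-1) ^ k ∧ α = β - k * π := by
  have rotate : (r : ℂ) * cexp (I * α) = s * cexp (I * β) ↔
      (r : ℂ) = s * cexp ((β - α : ℝ) * I) := by
    rw [← eq_div_iff (Complex.exp_ne_zero _), mul_div_assoc, ← Complex.exp_sub]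
    push_cast
    ring_nf
  have compare_parts : (r : ℂ) = s * cexp ((β - α : ℝ) * I) ↔
      r = s * Real.cos (β - α) ∧ Real.sin (β - α) = 0 := by
    rw [Complex.ext_iff, re_ofReal_mul, im_ofReal_mul, exp_ofReal_mul_I_re, exp_ofReal_mul_I_im,
      ofReal_re, ofReal_im, zero_eq_mul, or_iff_right hs]
  rw [rotate, compare_parts, Real.sin_eq_zero_iff]
  constructor
  · rintro ⟨hr, k, hk⟩
    rw [← hk, Real.cos_int_mul_pi] at hr
    exact ⟨k, hr, by linarith⟩
  · rintro ⟨k, hr, rfl⟩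
    rw [sub_sub_cancel, Real.cos_int_mul_pi]
    exact ⟨hr, k, rfl⟩

theorem I_mul_ofReal_mul_exp_eq_iff {R : ℝ} (hR : R ≠ 0) (θ τ ω : ℝ) :
    I * (ω : ℂ) * cexp (I * ω * τ) = R * cexp (I * θ) ↔
      ∃ k : ℤ, ω = R * (-1) ^ k ∧ ω * τ = θ - π / 2 - k * π := by
  have absorb_I : I * (ω : ℂ) * cexp (I * ω * τ) = ω * cexp (I * (ω * τ + π / 2 : ℝ)) := by
    push_cast
    rw [mul_add, Complex.exp_add, mul_comm I (π / 2 : ℂ), Complex.exp_pi_div_two_mul_I]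
    ring_nf
  rw [absorb_I, ofReal_mul_exp_I_mul_eq_iff hR]
  simp only [sub_right_comm θ, eq_sub_iff_add_eq (b := _ - _)]

theorem exists_I_mul_ofReal_mul_exp_eq_iff {R : ℝ} (hR : R ≠ 0) (θ τ : ℝ) :
    (∃ ω : ℝ, I * (ω : ℂ) * cexp (I * ω * τ) = R * cexp (I * θ)) ↔
      ∃ k : ℤ, R * τ = (-1) ^ k * (θ - π / 2 - k * π) := by
  simp only [I_mul_ofReal_mul_exp_eq_iff hR]
  rw [exists_comm]
  refine exists_congr fun k ↦ ?_
  rw [exists_eq_left]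
  rcases Int.even_or_odd k with hk | hk
  · simp only [hk.neg_one_zpow, mul_one, one_mul]
  · simp only [hk.neg_one_zpow, mul_neg_one, neg_mul, one_mul, neg_eq_iff_eq_neg]

theorem le_neg_one_zpow_mul_sub_of_pos {K : Type*} [Field K] [LinearOrder K]
    [IsStrictOrderedRing K] {φ p : K} (hφ : φ ≤ p / 2) {k : ℤ}
    (hpos : 0 < (-1) ^ k * (φ - k * p)) : φ ≤ (-1) ^ k * (φ - k * p) := by
  rcases le_or_gt φ 0 with hφ₀ | hφ₀
  · exact hφ₀.trans hpos.le
  have hp : 0 < p := by linarith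
  rcases Int.even_or_odd k with hk | hk
  · rw [hk.neg_one_zpow, one_mul] at hpos ⊢
    have hk_lt : (k : K) < 1 := lt_of_mul_lt_mul_right (by linarith) hp.le
    have hk_le : (k : K) ≤ 0 := by exact_mod_cast Int.lt_add_one_iff.mp (by exact_mod_cast hk_lt)
    linarith [mul_nonpos_of_nonpos_of_nonneg hk_le hp.le]
  · rw [hk.neg_one_zpow, neg_one_mul, neg_sub] at hpos ⊢
    have hk_pos : (0 : K) < k := pos_of_mul_pos_left (by linarith) hp.le
    have hk_ge : (1 : K) ≤ k := by exact_mod_cast hk_pos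
    linarith [le_mul_of_one_le_left hp.le hk_ge]

/-- for `R > 0` and `θ ∈ (π/2, π]`, the set
`T = {τ > 0 : ∃ ω ∈ ℝ, iω·e^{iωτ} = R·e^{iθ}}` has least element `(θ − π/2)/R`,
attained with `ω = R`. -/
theorem stmt13 (R θ : ℝ) (hR : 0 < R) (hθ : θ ∈ Set.Ioc (Real.pi / 2) Real.pi) :
    IsLeast {τ : ℝ | 0 < τ ∧ ∃ ω : ℝ,
        Complex.I * (ω : ℂ) * Complex.exp (Complex.I * (ω : ℂ) * (τ : ℂ)) =
          (R : ℂ) * Complex.exp (Complex.I * (θ : ℂ))}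
      ((θ - Real.pi / 2) / R) ∧
    Complex.I * (R : ℂ) * Complex.exp (Complex.I * (R : ℂ) * (((θ - Real.pi / 2) / R : ℝ) : ℂ)) =
      (R : ℂ) * Complex.exp (Complex.I * (θ : ℂ)) := by
  obtain ⟨hθ_gt, hθ_le⟩ := hθ
  have attained := (I_mul_ofReal_mul_exp_eq_iff hR.ne' θ ((θ - π / 2) / R) R).mpr
    ⟨0, by simp, by simp [mul_div_cancel₀ _ hR.ne']⟩
  refine ⟨⟨⟨div_pos (sub_pos.mpr hθ_gt) hR, R, attained⟩, ?_⟩, attained⟩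
  rintro τ ⟨hτ, hω⟩
  obtain ⟨k, hk⟩ := (exists_I_mul_ofReal_mul_exp_eq_iff hR.ne' θ τ).mp hω
  have hpos : 0 < (-1) ^ k * (θ - π / 2 - k * π) := hk ▸ mul_pos hR hτ
  rw [div_le_iff₀' hR, hk]
  exact le_neg_one_zpow_mul_sub_of_pos (by linarith) hpos
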